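/- Let μ be an infinite cardinal, κ = μ⁺, and assume cf(2^μ) = κ. Let Q be a separative, atomless partial order with |Q| ≤ 2^μ in which every decreasing sequence of length < κ has a lower bound. Then there exist a dense subset D of Q, a dense subset E of Col(κ, 2^μ), and an order isomorphism between D and E. -/

import Mathlib

open Cardinal

/-- Two elements of a partial order are incompatible if no element lies below both. -/
def Incompat {Q : Type} [PartialOrder Q] (p q : Q) : Prop := ¬ ∃ r, r ≤ p ∧ r ≤ q

/-- A subset `D` is dense if every element has an element of `D` below it. -/
def IsDenseSub {Q : Type} [PartialOrder Q] (D : Set Q) : Prop := ∀ p : Q, ∃ q ∈ D, q ≤ p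

/-- `ColLT κ α β`: partial functions from `α` to `β` with domain of size `< κ`,
ordered by reverse inclusion.  With `α` of size `κ` and `β` of size `θ`,
this is the Lévy collapse `Col(κ, θ)`. -/
def ColLT (κ : Cardinal) (α β : Type) : Type :=
  {f : α → Option β // #{a | f a ≠ none} < κ}

instance (κ : Cardinal) (α β : Type) : PartialOrder (ColLT κ α β) where
  le f g := ∀ a, g.1 a ≠ none → f.1 a = g.1 a
  le_refl _ _ _ := rfl
  le_trans f g h hfg hgh a ha := by
    have h1 := hgh a ha
    have h2 := hfg a (by rw [h1]; exact ha)
    rw [h2, h1]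
  le_antisymm f g hfg hgf := Subtype.ext (funext fun a => by
    by_cases hg : g.1 a = none
    · by_cases hf : f.1 a = none
      · rw [hf, hg]
      · exact (hgf a hf).symm
    · exact hfg a hg)

/-!
By atomlessness and closure, a binary tree of height `μ` below a given element of `Q` yields an
antichain of size `2 ^ μ` there.  So one can build inside `Q` a tree of height `κ` whose nodes have
`2 ^ μ` immediate successors, the successors of a branch forming a maximal antichain among the
lower bounds of that branch.  Distributivity of `Q` makes every level of the tree predense.  Since
`κ` is the cofinality of `2 ^ μ`, `Q` is a union of `κ` many sets of size `< 2 ^ μ`; by disjoint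
refinement, the successors of a branch at level `α` can be chosen so that each element of the
`α`-th set lying above some lower bound of the branch lies above a successor.  Hence the nodes are
dense in `Q`, and they are ordered like the elements of `Col(κ, 2 ^ μ)` whose domain is an initial
segment `{β | β ≤ α}`.
-/

open Function Set

section Incompatibility

variable {Q : Type} [PartialOrder Q]

theorem Incompat.symm {p q : Q} (h : Incompat p q) : Incompat q p :=
  fun ⟨r, hq, hp⟩ => h ⟨r, hp, hq⟩

theorem Incompat.mono {p q p' q' : Q} (h : Incompat p q) (hp : p' ≤ p) (hq : q' ≤ q) :
    Incompat p' q' :=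
  fun ⟨r, hrp, hrq⟩ => h ⟨r, hrp.trans hp, hrq.trans hq⟩

theorem not_incompat_of_le {p q : Q} (h : p ≤ q) : ¬ Incompat p q :=
  fun hpq => hpq ⟨p, le_rfl, h⟩

theorem exists_maximal_antichain {S Y : Set Q} (hYS : Y ⊆ S) (hY : Y.Pairwise Incompat) :
    ∃ Z, Y ⊆ Z ∧ Z ⊆ S ∧ Z.Pairwise Incompat ∧ ∀ p ∈ S, ∃ z ∈ Z, ¬ Incompat p z := by
  obtain ⟨Z, hYZ, hZ⟩ := zorn_subset_nonempty {Z : Set Q | Z ⊆ S ∧ Z.Pairwise Incompat}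
    (fun c hc hchain _ => ⟨⋃₀ c, ⟨sUnion_subset fun s hs => (hc hs).1,
      (pairwise_sUnion hchain.directedOn).2 fun s hs => (hc hs).2⟩,
      fun s hs => subset_sUnion_of_mem hs⟩) Y ⟨hYS, hY⟩
  refine ⟨Z, hYZ, hZ.prop.1, hZ.prop.2, fun p hp => ?_⟩
  by_contra! hpZ
  have hinsert : insert p Z ⊆ S ∧ (insert p Z).Pairwise Incompat :=
    ⟨insert_subset hp hZ.prop.1,
      hZ.prop.2.insert fun z hz _ => ⟨hpZ z hz, (hpZ z hz).symm⟩⟩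
  have hpmem : p ∈ Z := hZ.le_of_ge hinsert (subset_insert p Z) (mem_insert p Z)
  exact not_incompat_of_le le_rfl (hpZ p hpmem)

/-- Below every element of `Q` there is an antichain of size at least `θ`. -/
def HasLargeAntichains (θ : Cardinal) (Q : Type) [PartialOrder Q] : Prop :=
  ∀ q : Q, ∃ X : Set Q, θ ≤ #X ∧ X ⊆ Iic q ∧ X.Pairwise Incompat

end Incompatibility

section Transversal

universe u

variable {I Q : Type u}

theorem exists_injective_forall_mem (C : I → Set Q) (hC : ∀ i, #I < #(C i)) :
    ∃ x : I → Q, Injective x ∧ ∀ i, x i ∈ C i := by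
  obtain ⟨_, _⟩ := exists_wellFoundedLT I
  have hfresh (i : I) (f : ∀ j, j < i → Q) : ∃ z ∈ C i, ∀ j h, z ≠ f j h := by
    by_contra! hcon
    have hsub : C i ⊆ range fun j : Iio i => f j.1 j.2 := fun z hz =>
      let ⟨j, h, hj⟩ := hcon z hz
      ⟨⟨j, h⟩, hj.symm⟩
    exact ((mk_le_mk_of_subset hsub).trans (mk_range_le.trans (mk_set_le _))).not_gt (hC i)
  choose c hcmem hcne using hfresh
  let x : I → Q := (wellFounded_lt (α := I)).fix c
  have hx (i : I) : x i = c i fun j _ => x j := WellFounded.fix_eq _ _ _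
  have hne {i j : I} (h : j < i) : x i ≠ x j := hx i ▸ hcne i (fun j _ => x j) j h
  refine ⟨x, injective_iff_pairwise_ne.2 fun i j hij => ?_, fun i => hx i ▸ hcmem i _⟩
  exact hij.lt_or_gt.elim (fun h => (hne h).symm) hne

theorem lt_mk_sdiff {ν : Cardinal} (hν : ℵ₀ ≤ ν) {A B : Set Q} (hA : ν < #A) (hB : #B ≤ ν) :
    ν < #(A \ B : Set Q) := by
  by_contra! h
  exact ((le_mk_sdiff_add_mk A B).trans (add_le_of_le hν h hB)).not_gt hA

theorem exists_injective_avoiding {ν : Cardinal} (hν : ℵ₀ ≤ ν) (hI : #I ≤ ν)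
    (C : I → I → Set Q) (hC : ∀ i, ν < #(C i i)) :
    ∃ (o : I → I) (x : I → Q), Injective x ∧ (∀ i, x i ∈ C (o i) i) ∧
      ∀ i j, o i ≠ o j → x i ∉ C (o i) j ∨ x j ∉ C (o j) i := by
  obtain ⟨_, _⟩ := exists_wellFoundedLT I
  -- With `o i` least such that `C (o i) i` is large, `C (o i) j` is small whenever `o i < o j`.
  have hleast (i : I) : ∃ j, ν < #(C j i) ∧ ∀ k < j, #(C k i) ≤ ν := by
    obtain ⟨j, hj, hmin⟩ := wellFounded_lt.has_min {j | ν < #(C j i)} ⟨i, hC i⟩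
    exact ⟨j, hj, fun k hk => not_lt.1 fun h => hmin k h hk⟩
  choose o ho hmin using hleast
  let B (j : I) : Set Q := ⋃ i : {i // #(C j i) ≤ ν}, C j i
  have hB (j : I) : #(B j) ≤ ν :=
    (mk_iUnion_le _).trans (mul_le_of_le hν ((mk_subtype_le _).trans hI) (ciSup_le' fun i => i.2))
  obtain ⟨x, hinj, hx⟩ := exists_injective_forall_mem (fun i => C (o i) i \ B (o i))
    fun i => hI.trans_lt (lt_mk_sdiff hν (ho i) (hB _))
  have havoid {i j : I} (h : o i < o j) : x i ∉ C (o i) j :=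
    fun hmem => (hx i).2 (mem_iUnion.2 ⟨⟨j, hmin j _ h⟩, hmem⟩)
  exact ⟨o, x, hinj, fun i => (hx i).1, fun i j hij => hij.lt_or_gt.imp havoid havoid⟩

end Transversal

section Refinement

variable {Q : Type} [PartialOrder Q]

theorem HasLargeAntichains.exists_disjoint_refinement {θ : Cardinal} (hθ : ℵ₀ < θ)
    (hQ : HasLargeAntichains θ Q) {I : Type} (hI : #I < θ) (p : I → Q) :
    ∃ r : I → Q, (∀ i, r i ≤ p i) ∧ Pairwise fun i j => Incompat (r i) (r j) := by
  choose X hXcard hXle hXanti using fun i => hQ (p i)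
  let C (j i : I) : Set Q := {x ∈ X j | ¬ Incompat x (p i)}
  have hC (i : I) : max ℵ₀ #I < #(C i i) := by
    have hCX : C i i = X i := sep_eq_self_iff_mem_true.2 fun x hx =>
      not_incompat_of_le (hXle i hx)
    exact hCX ▸ (max_lt hθ hI).trans_le (hXcard i)
  obtain ⟨o, x, hinj, hxC, havoid⟩ :=
    exists_injective_avoiding (le_max_left _ _) (le_max_right _ _) C hC
  choose r hrx hrp using fun i => not_not.1 (hxC i).2
  refine ⟨r, hrp, fun i j hij => ?_⟩
  have hincompat {i j : I} (h : x i ∉ C (o i) j) : Incompat (x i) (p j) :=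
    by_contra fun h' => h ⟨(hxC i).1, h'⟩
  rcases eq_or_ne (o i) (o j) with h | h
  · exact (hXanti (o j) (h ▸ (hxC i).1) (hxC j).1 (hinj.ne hij)).mono (hrx i) (hrx j)
  · rcases havoid i j h with h | h
    · exact (hincompat h).mono (hrx i) (hrp j)
    · exact ((hincompat h).mono (hrx j) (hrp i)).symm

theorem HasLargeAntichains.exists_predense_antichain_refining {Θ : Type} (hΘ : #Θ ≠ 0)
    (hQΘ : #Q ≤ #Θ) (hQ : HasLargeAntichains #Θ Q) {L : LowerSet Q} {R : Set Q}
    (hRne : R.Nonempty) (hRL : R ⊆ L) (hR : R.Pairwise Incompat) :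
    ∃ g : Θ → Q, (∀ x, g x ∈ L) ∧ (Pairwise fun x y => Incompat (g x) (g y)) ∧
      (∀ p ∈ L, ∃ x, ¬ Incompat p (g x)) ∧ ∀ r ∈ R, ∃ x, g x ≤ r := by
  choose X hXcard hXle hXanti using hQ
  have hYL : ⋃ r ∈ R, X r ⊆ L :=
    iUnion₂_subset fun r hr x hx => L.lower (hXle r hx) (hRL hr)
  have hY : (⋃ r ∈ R, X r).Pairwise Incompat := by
    intro y hy z hz hyz
    obtain ⟨r, hr, hyr⟩ := mem_iUnion₂.1 hy
    obtain ⟨t, ht, hzt⟩ := mem_iUnion₂.1 hz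
    rcases eq_or_ne r t with rfl | hrt
    · exact hXanti r hyr hzt hyz
    · exact (hR hr ht hrt).mono (hXle r hyr) (hXle t hzt)
  obtain ⟨Z, hYZ, hZL, hZ, hZpredense⟩ := exists_maximal_antichain hYL hY
  have hXZ {r : Q} (hr : r ∈ R) : X r ⊆ Z := (subset_biUnion_of_mem hr).trans hYZ
  have hcard : #Θ = #Z :=
    le_antisymm ((hXcard _).trans (mk_le_mk_of_subset (hXZ hRne.some_mem)))
      ((mk_set_le Z).trans hQΘ)
  obtain ⟨f⟩ := Cardinal.eq.1 hcard
  refine ⟨fun x => f x, fun x => hZL (f x).2, fun x y hxy => hZ (f x).2 (f y).2 ?_,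
    fun p hp => ?_, fun r hr => ?_⟩
  · exact Subtype.coe_injective.ne (f.injective.ne hxy)
  · obtain ⟨z, hz, hpz⟩ := hZpredense p hp
    exact ⟨f.symm ⟨z, hz⟩, by simpa using hpz⟩
  · obtain ⟨y, hy⟩ : (X r).Nonempty :=
      nonempty_coe_sort.1 (mk_ne_zero_iff.1 (hΘ.pos.trans_le (hXcard r)).ne')
    exact ⟨f.symm ⟨y, hXZ hr hy⟩, by simpa using hXle r hy⟩

theorem HasLargeAntichains.exists_predense_antichain {Θ : Type} (hΘ : ℵ₀ < #Θ)
    (hQΘ : #Q ≤ #Θ) (hQ : HasLargeAntichains #Θ Q) {L : LowerSet Q} (hL : (L : Set Q).Nonempty)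
    {S : Set Q} (hS : #S < #Θ) :
    ∃ g : Θ → Q, (∀ x, g x ∈ L) ∧ (Pairwise fun x y => Incompat (g x) (g y)) ∧
      (∀ p ∈ L, ∃ x, ¬ Incompat p (g x)) ∧ ∀ q ∈ S, (∃ p ∈ L, p ≤ q) → ∃ x, g x ≤ q := by
  obtain ⟨p₀, hp₀⟩ := hL
  let I : Set Q := {q ∈ insert p₀ S | ∃ p ∈ L, p ≤ q}
  have hI : #I < #Θ := (mk_le_mk_of_subset (sep_subset _ _)).trans_lt
    (mk_insert_le.trans_lt (add_lt_of_lt hΘ.le hS (one_lt_aleph0.trans hΘ)))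
  choose p hpL hpq using fun i : I => i.2.2
  obtain ⟨r, hrp, hr⟩ := hQ.exists_disjoint_refinement hΘ hI p
  obtain ⟨g, hgL, hg, hgpredense, hgr⟩ := hQ.exists_predense_antichain_refining
    (aleph0_pos.trans hΘ).ne' hQΘ
    ⟨r ⟨p₀, mem_insert _ _, p₀, hp₀, le_rfl⟩, mem_range_self _⟩
    (range_subset_iff.2 fun i => L.lower (hrp i) (hpL i)) hr.range_pairwise
  refine ⟨g, hgL, hg, hgpredense, fun q hq hqL => ?_⟩
  let i : I := ⟨q, mem_insert_of_mem _ hq, hqL⟩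
  obtain ⟨x, hx⟩ := hgr (r i) (mem_range_self i)
  exact ⟨x, hx.trans ((hrp i).trans (hpq i))⟩

end Refinement

/-- `<K`-closedness of `Q` for a well-order `K`: every decreasing sequence indexed by a proper
initial segment of `K` has a lower bound. -/
def SeqClosed (K Q : Type*) [LinearOrder K] [Preorder Q] : Prop :=
  ∀ (α : K) (f : K → Q), AntitoneOn f (Iio α) → ∃ q, ∀ β < α, q ≤ f β

theorem seqClosed_ord_toType {κ : Cardinal} {Q : Type*} [Preorder Q]
    (h : ∀ o : Ordinal, o < κ.ord → ∀ f : o.ToType → Q, (∀ i j, i ≤ j → f j ≤ f i) →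
      ∃ q, ∀ i, q ≤ f i) : SeqClosed κ.ord.ToType Q := by
  intro α f hf
  let o := Ordinal.typein (α := κ.ord.ToType) (· < ·) α
  obtain ⟨e⟩ := Ordinal.type_eq.1 (Ordinal.type_toType o)
  let e' := OrderIso.ofRelIsoLT e
  obtain ⟨q, hq⟩ := h o (Ordinal.typein_lt_self α) (fun i => f (e' i))
    fun i j hij => hf (e' i).2 (e' j).2 (e'.monotone hij)
  exact ⟨q, fun β hβ => by simpa using hq (e'.symm ⟨β, hβ⟩)⟩

section Descent

variable {K Q : Type*} [LinearOrder K] [Preorder Q]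

/-- The lower bounds in `R` of the initial segment `(f β)_{β < α}` of the sequence `f`. -/
def boundsBelow (R : LowerSet Q) (f : K → Q) (α : K) : LowerSet Q where
  carrier := {q | q ∈ R ∧ ∀ β < α, q ≤ f β}
  lower' _ _ hle h := ⟨R.lower hle h.1, fun β hβ => hle.trans (h.2 β hβ)⟩

theorem boundsBelow_congr {R : LowerSet Q} {f g : K → Q} {α : K} (h : ∀ β < α, f β = g β) :
    boundsBelow R f α = boundsBelow R g α :=
  SetLike.ext fun q => and_congr_right fun _ => forall₂_congr fun β hβ => by rw [h β hβ]

theorem SeqClosed.boundsBelow_nonempty (hQ : SeqClosed K Q) {R : LowerSet Q}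
    (hR : (R : Set Q).Nonempty) {f : K → Q} {α : K} (hf : ∀ β < α, f β ∈ boundsBelow R f β) :
    (boundsBelow R f α : Set Q).Nonempty := by
  have hanti : AntitoneOn f (Iio α) := fun β _ γ hγ hle =>
    hle.eq_or_lt.elim (fun h => h ▸ le_rfl) ((hf γ hγ).2 β)
  obtain ⟨q, hq⟩ := hQ α f hanti
  by_cases hα : ∃ β, β < α
  · obtain ⟨β, hβ⟩ := hα
    exact ⟨q, R.lower (hq β hβ) (hf β hβ).1, hq⟩
  · exact hR.imp fun p hp => ⟨hp, fun β hβ => (hα ⟨β, hβ⟩).elim⟩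

variable [WellFoundedLT K]

/-- The sequence obtained by repeatedly applying the choice function `c` to the set of lower bounds
in `R` of the part of the sequence constructed so far. -/
noncomputable def descent (R : LowerSet Q) (c : K → LowerSet Q → Q) : K → Q :=
  wellFounded_lt.fix fun α f => c α
    { carrier := {q | q ∈ R ∧ ∀ β h, q ≤ f β h}
      lower' := fun _ _ hle h => ⟨R.lower hle h.1, fun β hβ => hle.trans (h.2 β hβ)⟩ }

variable {R : LowerSet Q} {c c' : K → LowerSet Q → Q}

theorem descent_eq (α : K) : descent R c α = c α (boundsBelow R (descent R c) α) :=
  WellFounded.fix_eq _ _ _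

theorem descent_congr {α : K} (h : ∀ β ≤ α, c β = c' β) : descent R c α = descent R c' α := by
  induction α using WellFoundedLT.induction with
  | ind α ih =>
    have hbelow (β : K) (hβ : β < α) : descent R c β = descent R c' β :=
      ih β hβ fun γ hγ => h γ (hγ.trans hβ.le)
    rw [descent_eq, descent_eq, boundsBelow_congr hbelow, h α le_rfl]

theorem SeqClosed.descent_mem (hQ : SeqClosed K Q) (hR : (R : Set Q).Nonempty)
    (hc : ∀ α (L : LowerSet Q), (L : Set Q).Nonempty → c α L ∈ L) (α : K) :
    descent R c α ∈ boundsBelow R (descent R c) α := by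
  induction α using WellFoundedLT.induction with
  | ind α ih =>
    rw [descent_eq]
    exact hc α _ (hQ.boundsBelow_nonempty hR ih)

theorem SeqClosed.exists_le_forall_mem (hQ : SeqClosed K Q) (α : K) {U : K → LowerSet Q}
    (hU : ∀ β < α, ∀ q, ∃ p ∈ U β, p ≤ q) (q : Q) : ∃ p ≤ q, ∀ β < α, p ∈ U β := by
  have hstep (β : K) (L : LowerSet Q) (hL : (L : Set Q).Nonempty) :
      ∃ p ∈ L, β < α → p ∈ U β := by
    obtain ⟨a, ha⟩ := hL
    by_cases hβ : β < α
    · obtain ⟨p, hp, hpa⟩ := hU β hβ a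
      exact ⟨p, L.lower hpa ha, fun _ => hp⟩
    · exact ⟨a, ha, fun h => (hβ h).elim⟩
  have : Nonempty Q := ⟨q⟩
  choose! c hcL hcU using hstep
  have hmem (β : K) := hQ.descent_mem (R := LowerSet.Iic q) ⟨q, le_rfl⟩ hcL β
  have hne (β : K) := hQ.boundsBelow_nonempty (R := LowerSet.Iic q) ⟨q, le_rfl⟩
    fun γ (_ : γ < β) => hmem γ
  obtain ⟨p, hpq, hp⟩ := hne α
  refine ⟨p, hpq, fun β hβ => (U β).lower (hp β hβ) ?_⟩
  rw [descent_eq]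
  exact hcU β _ (hne β) hβ

end Descent

/-- A tree of elements of `R` of height `K`, with nodes labelled by sequences in `X` and decreasing
along branches.  A branch is a total function `s : K → X`; the node `node α s` at level `α`
depends only on `s β` for `β ≤ α`. -/
structure DescendingTree (K X : Type*) {Q : Type*} [LinearOrder K] [Preorder Q]
    (R : LowerSet Q) where
  node : K → (K → X) → Q
  node_congr : ∀ {α s t}, (∀ β ≤ α, s β = t β) → node α s = node α t
  node_mem : ∀ α s, node α s ∈ boundsBelow R (fun β => node β s) α

namespace DescendingTree

section Basic

variable {K X Q : Type*} [LinearOrder K] [Preorder Q] {R : LowerSet Q} (T : DescendingTree K X R)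

/-- The elements of `R` that lie below all nodes of the branch `s` at levels `< α`. -/
def bounds (α : K) (s : K → X) : LowerSet Q :=
  boundsBelow R (fun β => T.node β s) α

theorem antitone_node (s : K → X) : Antitone fun α => T.node α s := fun α β hle =>
  hle.eq_or_lt.elim (fun h => h ▸ le_rfl) ((T.node_mem β s).2 α)

theorem bounds_nonempty (hQ : SeqClosed K Q) (hR : (R : Set Q).Nonempty) (α : K) (s : K → X) :
    (T.bounds α s : Set Q).Nonempty :=
  hQ.boundsBelow_nonempty hR fun β _ => T.node_mem β s

end Basic

section Splitting

variable {K X Q : Type} [LinearOrder K] [WellFoundedLT K] [PartialOrder Q] {R : LowerSet Q}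
  {T : DescendingTree K X R}

/-- Distinct immediate successors of a branch are incompatible. -/
def IsSplitting (T : DescendingTree K X R) : Prop :=
  ∀ α s, Pairwise fun x y => Incompat (T.node α (update s α x)) (T.node α (update s α y))

theorem IsSplitting.eq_of_le_node (hT : T.IsSplitting) {r : Q} {α β : K} {s t : K → X}
    (hs : r ≤ T.node α s) (ht : r ≤ T.node β t) {γ : K} (hα : γ ≤ α) (hβ : γ ≤ β) :
    s γ = t γ := by
  induction γ using WellFoundedLT.induction with
  | ind γ ih =>
    by_contra hne
    have hnode : T.node γ (update s γ (t γ)) = T.node γ t := T.node_congr fun δ hδ => by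
      rcases hδ.eq_or_lt with rfl | hlt
      · exact update_self ..
      · rw [update_of_ne hlt.ne]
        exact ih δ hlt (hδ.trans hα) (hδ.trans hβ)
    refine hT γ s hne ⟨r, ?_, ?_⟩
    · rw [update_eq_self]
      exact hs.trans (T.antitone_node s hα)
    · rw [hnode]
      exact ht.trans (T.antitone_node t hβ)

theorem IsSplitting.node_le_node_iff [Nontrivial X] (hT : T.IsSplitting) {α β : K}
    {s t : K → X} : T.node α s ≤ T.node β t ↔ β ≤ α ∧ ∀ γ ≤ β, s γ = t γ := by
  constructor
  · intro hle
    have hβα : β ≤ α := by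
      by_contra! hαβ
      obtain ⟨x, hx⟩ := exists_ne (t β)
      have hnode : T.node α (update t β x) = T.node α s := T.node_congr fun γ hγ => by
        rw [update_of_ne (hγ.trans_lt hαβ).ne]
        exact (hT.eq_of_le_node le_rfl hle hγ (hγ.trans hαβ.le)).symm
      have hle' : T.node β (update t β x) ≤ T.node β t :=
        ((T.antitone_node _ hαβ.le).trans hnode.le).trans hle
      exact hx ((update_self ..).symm.trans (hT.eq_of_le_node le_rfl hle' le_rfl le_rfl))
    exact ⟨hβα, fun γ hγ => hT.eq_of_le_node le_rfl hle (hγ.trans hβα) hγ⟩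
  · rintro ⟨hβα, heq⟩
    exact (T.antitone_node s hβα).trans (T.node_congr heq).le

end Splitting

section Dense

variable {K X Q : Type} [LinearOrder K] [WellFoundedLT K] [PartialOrder Q]
  {T : DescendingTree K X (⊤ : LowerSet Q)}

theorem IsSplitting.exists_le_mem_bounds_of_forall_lt [Nonempty X] (hT : T.IsSplitting)
    (hQ : SeqClosed K Q) {α : K} (hα : ∀ β < α, ∀ q, ∃ s, ¬ Incompat q (T.node β s)) (q : Q) :
    ∃ s, ∃ p ∈ T.bounds α s, p ≤ q := by
  let U (β : K) : LowerSet Q := ⨆ s, LowerSet.Iic (T.node β s)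
  have hU (β : K) (hβ : β < α) (q : Q) : ∃ p ∈ U β, p ≤ q := by
    obtain ⟨s, hs⟩ := hα β hβ q
    obtain ⟨p, hpq, hps⟩ := not_not.1 hs
    exact ⟨p, LowerSet.mem_iSup_iff.2 ⟨s, hps⟩, hpq⟩
  obtain ⟨p, hpq, hpU⟩ := hQ.exists_le_forall_mem α hU q
  have hpU' (β : K) (hβ : β < α) : ∃ s, p ≤ T.node β s := LowerSet.mem_iSup_iff.1 (hpU β hβ)
  choose! S hS using hpU'
  -- The nodes above `p` at different levels lie on a single branch because `T` is splitting.
  refine ⟨fun β => S β β, p, ⟨trivial, fun β hβ => ?_⟩, hpq⟩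
  have hnode : T.node β (fun γ => S γ γ) = T.node β (S β) := T.node_congr fun γ hγ =>
    hT.eq_of_le_node (hS γ (hγ.trans_lt hβ)) (hS β hβ) le_rfl hγ
  exact (hS β hβ).trans_eq hnode.symm

theorem IsSplitting.exists_le_mem_bounds [Nonempty X] (hT : T.IsSplitting) (hQ : SeqClosed K Q)
    (hpredense : ∀ α s, ∀ p ∈ T.bounds α s, ∃ x, ¬ Incompat p (T.node α (update s α x)))
    (α : K) (q : Q) : ∃ s, ∃ p ∈ T.bounds α s, p ≤ q := by
  have hlevel (α : K) : ∀ q, ∃ s, ¬ Incompat q (T.node α s) := by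
    induction α using WellFoundedLT.induction with
    | ind α ih =>
      intro q
      obtain ⟨s, p, hp, hpq⟩ := hT.exists_le_mem_bounds_of_forall_lt hQ ih q
      obtain ⟨x, hx⟩ := hpredense α s p hp
      exact ⟨update s α x, fun h => hx (h.mono hpq le_rfl)⟩
  exact hT.exists_le_mem_bounds_of_forall_lt hQ (fun β _ => hlevel β) q

end Dense

end DescendingTree

section Existence

theorem SeqClosed.exists_descendingTree {K X Q : Type*} [LinearOrder K] [WellFoundedLT K]
    [Preorder Q] (hQ : SeqClosed K Q) {R : LowerSet Q} (hR : (R : Set Q).Nonempty)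
    {P : K → LowerSet Q → (X → Q) → Prop}
    (hP : ∀ α (L : LowerSet Q), (L : Set Q).Nonempty → ∃ g, (∀ x, g x ∈ L) ∧ P α L g) :
    ∃ T : DescendingTree K X R,
      ∀ α s, P α (T.bounds α s) fun x => T.node α (update s α x) := by
  have : Nonempty (X → Q) := ⟨fun _ => hR.some⟩
  choose! g hgL hgP using hP
  let T : DescendingTree K X R :=
    { node := fun α s => descent R (fun β L => g β L (s β)) α
      node_congr := fun h => descent_congr fun β hβ => by rw [h β hβ]
      node_mem := fun α s => hQ.descent_mem hR (fun β L hL => hgL β L hL (s β)) α }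
  refine ⟨T, fun α s => ?_⟩
  have hnode (x : X) : T.node α (update s α x) = g α (T.bounds α s) x := by
    have hbounds : T.bounds α (update s α x) = T.bounds α s :=
      boundsBelow_congr fun β hβ =>
        T.node_congr fun γ hγ => update_of_ne (hγ.trans_lt hβ).ne _ _
    rw [← hbounds]
    exact (descent_eq (c := fun β L => g β L (update s α x β)) α).trans
      (congrArg (g α _) (update_self ..))
  simpa only [hnode] using hgP α _ (T.bounds_nonempty hQ hR α s)

variable {K Q : Type} [LinearOrder K] [WellFoundedLT K] [PartialOrder Q]

theorem SeqClosed.hasLargeAntichains (hQ : SeqClosed K Q)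
    (hatomless : ∀ p : Q, ∃ q r, q ≤ p ∧ r ≤ p ∧ Incompat q r) (α : K) :
    HasLargeAntichains (2 ^ #(Iio α)) Q := by
  intro q
  have hsplit (_ : K) (L : LowerSet Q) (hL : (L : Set Q).Nonempty) :
      ∃ g : Bool → Q, (∀ x, g x ∈ L) ∧ Pairwise fun x y => Incompat (g x) (g y) := by
    obtain ⟨p, hp⟩ := hL
    obtain ⟨a, b, hap, hbp, hab⟩ := hatomless p
    refine ⟨fun x => cond x a b, Bool.forall_bool.2 ⟨L.lower hbp hp, L.lower hap hp⟩, ?_⟩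
    simp [Pairwise, hab, hab.symm]
  obtain ⟨T, hT⟩ := hQ.exists_descendingTree (R := LowerSet.Iic q) ⟨q, le_rfl⟩ hsplit
  replace hT : T.IsSplitting := hT
  let extend (x : Iio α → Bool) : K → Bool := Function.extend Subtype.val x fun _ => false
  choose r hr using fun x => T.bounds_nonempty hQ ⟨q, le_rfl⟩ α (extend x)
  have hanti {x y : Iio α → Bool} (hxy : x ≠ y) : Incompat (r x) (r y) := by
    rintro ⟨p, hpx, hpy⟩
    refine hxy (funext fun β => ?_)
    have heq : extend x β = extend y β := hT.eq_of_le_node (hpx.trans ((hr x).2 β β.2))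
      (hpy.trans ((hr y).2 β β.2)) le_rfl le_rfl
    simpa [extend, Subtype.val_injective.extend_apply] using heq
  have hinj : Injective r := injective_iff_pairwise_ne.2 fun x y hxy heq =>
    not_incompat_of_le heq.le (hanti hxy)
  refine ⟨range r, ?_, range_subset_iff.2 fun x => (hr x).1, ?_⟩
  · simp [mk_range_eq r hinj]
  · exact Pairwise.range_pairwise fun x y hxy => hanti hxy

theorem SeqClosed.exists_dense_tree [Nonempty Q] {Θ : Type} (hQ : SeqClosed K Q)
    (hΘ : ℵ₀ < #Θ) (hQΘ : #Q ≤ #Θ) (hQanti : HasLargeAntichains #Θ Q) {S : K → Set Q}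
    (hS : ∀ α, #(S α) < #Θ) (hcover : ∀ q, ∃ α, q ∈ S α) :
    ∃ T : DescendingTree K Θ (⊤ : LowerSet Q), T.IsSplitting ∧ ∀ q, ∃ α s, T.node α s ≤ q := by
  obtain ⟨T, hT⟩ := hQ.exists_descendingTree (R := ⊤) univ_nonempty
    fun α _ hL => hQanti.exists_predense_antichain hΘ hQΘ hL (hS α)
  have hsplit : T.IsSplitting := fun α s => (hT α s).1
  have : Nonempty Θ := mk_ne_zero_iff.1 (aleph0_pos.trans hΘ).ne'
  refine ⟨T, hsplit, fun q => ?_⟩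
  obtain ⟨α, hα⟩ := hcover q
  obtain ⟨s, hs⟩ := hsplit.exists_le_mem_bounds hQ (fun α s => (hT α s).2.1) α q
  obtain ⟨x, hx⟩ := (hT α s).2.2 q hα hs
  exact ⟨α, update s α x, hx⟩

end Existence

section Collapse

variable {κ : Cardinal} {β : Type}

theorem mk_Iic_ord_toType_lt (hκ : ℵ₀ ≤ κ) (α : κ.ord.ToType) : #(Iic α) < κ :=
  (mk_Iic_lt α (by simp) (by simpa using hκ)).trans_eq (mk_ord_toType κ)

/-- The restriction of `s` to `{a | a ≤ α}`, as an element of `Col(κ, β)`. -/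
noncomputable def ColLT.restrictIic (hκ : ℵ₀ ≤ κ) (α : κ.ord.ToType) (s : κ.ord.ToType → β) :
    ColLT κ κ.ord.ToType β :=
  ⟨fun a => if a ≤ α then some (s a) else none,
    (mk_le_mk_of_subset fun a ha => by simpa using ha).trans_lt (mk_Iic_ord_toType_lt hκ α)⟩

theorem ColLT.le_restrictIic_iff {hκ : ℵ₀ ≤ κ} {α : κ.ord.ToType} {s : κ.ord.ToType → β}
    {f : ColLT κ κ.ord.ToType β} :
    f ≤ ColLT.restrictIic hκ α s ↔ ∀ a ≤ α, f.1 a = some (s a) := by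
  have hrestrict {a : κ.ord.ToType} (ha : a ≤ α) :
      (ColLT.restrictIic hκ α s).1 a = some (s a) := if_pos ha
  refine ⟨fun h a ha => ?_, fun h a hne => ?_⟩
  · exact (h a (by simp [hrestrict ha])).trans (hrestrict ha)
  · have ha : a ≤ α := by_contra fun ha => hne (if_neg ha)
    exact (h a ha).trans (hrestrict ha).symm

theorem ColLT.restrictIic_le_restrictIic_iff {hκ : ℵ₀ ≤ κ} {α α' : κ.ord.ToType}
    {s t : κ.ord.ToType → β} :
    ColLT.restrictIic hκ α s ≤ ColLT.restrictIic hκ α' t ↔ α' ≤ α ∧ ∀ a ≤ α', s a = t a := by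
  have hvalue (a : κ.ord.ToType) :
      (ColLT.restrictIic hκ α s).1 a = some (t a) ↔ a ≤ α ∧ s a = t a := by
    simp [ColLT.restrictIic]
  simp only [ColLT.le_restrictIic_iff, hvalue]
  exact ⟨fun h => ⟨(h α' le_rfl).1, fun a ha => (h a ha).2⟩,
    fun h a ha => ⟨ha.trans h.1, h.2 a ha⟩⟩

theorem ColLT.exists_restrictIic_le [Nonempty β] (hκ : κ.IsRegular)
    (f : ColLT κ κ.ord.ToType β) : ∃ α s, ColLT.restrictIic hκ.aleph0_le α s ≤ f := by
  have hbounded : ¬ IsCofinal {a | f.1 a ≠ none} := fun h =>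
    f.2.not_ge ((hκ.cof_ord.ge.trans (Ordinal.cof_toType _).ge).trans (Order.cof_le h))
  obtain ⟨α, hα⟩ := not_isCofinal_iff.1 hbounded
  refine ⟨α, fun a => (f.1 a).getD (Classical.arbitrary β), fun a ha => ?_⟩
  obtain ⟨x, hx⟩ := Option.ne_none_iff_exists'.1 ha
  simp [ColLT.restrictIic, hx, (hα a ha).le]

end Collapse

section Assembly

theorem nonempty_orderIso_range {A P Q : Type*} [PartialOrder P] [PartialOrder Q] {f : A → P}
    {g : A → Q} (h : ∀ a b, f a ≤ f b ↔ g a ≤ g b) : Nonempty (range f ≃o range g) := by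
  have hle (x y : range f) : g (rangeSplitting f x) ≤ g (rangeSplitting f y) ↔ x ≤ y := by
    rw [← h, apply_rangeSplitting f, apply_rangeSplitting f, Subtype.coe_le_coe]
  let e : range f ↪o range g :=
    OrderEmbedding.ofMapLEIff (fun x => ⟨g (rangeSplitting f x), mem_range_self _⟩) hle
  have hsurj : Surjective e := by
    rintro ⟨_, a, rfl⟩
    have hfa : f (rangeSplitting f ⟨f a, mem_range_self a⟩) = f a := apply_rangeSplitting f _
    exact ⟨⟨f a, mem_range_self a⟩,
      Subtype.ext (le_antisymm ((h _ _).1 hfa.le) ((h _ _).1 hfa.ge))⟩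
  exact ⟨RelIso.ofSurjective e hsurj⟩

variable {κ θ : Cardinal.{0}}

theorem exists_cover_of_cof_ord_eq {Q : Type} (hθ : ℵ₀ ≤ θ) (hcof : θ.ord.cof = κ)
    (hQ : #Q ≤ θ) :
    ∃ S : κ.ord.ToType → Set Q, (∀ α, #(S α) < θ) ∧ ∀ q, ∃ α, q ∈ S α := by
  obtain ⟨ι⟩ : #Q ≤ #θ.ord.ToType := hQ.trans_eq (mk_ord_toType θ).symm
  obtain ⟨C, hC, hCcard⟩ := Order.exists_cof_eq θ.ord.ToType
  rw [Ordinal.cof_toType, hcof, ← mk_ord_toType κ] at hCcard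
  obtain ⟨c⟩ := Cardinal.eq.1 hCcard
  refine ⟨fun α => ι ⁻¹' Iic (c.symm α).1, fun α => ?_, fun q => ?_⟩
  · exact (mk_preimage_of_injective _ _ ι.injective).trans_lt (mk_Iic_ord_toType_lt hθ _)
  · obtain ⟨b, hb, hqb⟩ := hC (ι q)
    exact ⟨c ⟨b, hb⟩, by simpa using hqb⟩

theorem exists_mk_Iio_ord_toType_eq {μ : Cardinal} (h : μ < κ) :
    ∃ α : κ.ord.ToType, #(Iio α) = μ := by
  obtain ⟨α, hα⟩ := Ordinal.typein_surj (α := κ.ord.ToType) (· < ·)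
    (o := μ.ord) (by simpa using h)
  exact ⟨α, (congrArg Ordinal.card hα).trans (card_ord μ)⟩

theorem exists_dense_orderIso_colLT (hθ : ℵ₀ < θ) (hcof : θ.ord.cof = κ) {Q : Type}
    [PartialOrder Q] [Nonempty Q] (hclosed : SeqClosed κ.ord.ToType Q)
    (hanti : HasLargeAntichains θ Q) (hsize : #Q ≤ θ) :
    ∃ (D : Set Q) (E : Set (ColLT κ κ.ord.ToType θ.ord.ToType)),
      IsDenseSub D ∧ IsDenseSub E ∧ Nonempty (D ≃o E) := by
  have hκ : κ.IsRegular := hcof ▸ isRegular_cof (isSuccLimit_ord hθ.le)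
  have hΘ : #θ.ord.ToType = θ := mk_ord_toType θ
  have : Nontrivial θ.ord.ToType :=
    one_lt_iff_nontrivial.1 (hΘ.symm ▸ one_lt_aleph0.trans hθ)
  obtain ⟨S, hS, hcover⟩ := exists_cover_of_cof_ord_eq hθ.le hcof hsize
  obtain ⟨T, hT, hdense⟩ := hclosed.exists_dense_tree (Θ := θ.ord.ToType)
    (by rwa [hΘ]) (by rwa [hΘ]) (by rwa [hΘ]) (by rwa [hΘ]) hcover
  refine ⟨range (uncurry T.node), range (uncurry (ColLT.restrictIic hκ.aleph0_le)),
    fun q => ?_, fun f => ?_, ?_⟩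
  · obtain ⟨α, s, h⟩ := hdense q
    exact ⟨_, mem_range_self (α, s), h⟩
  · obtain ⟨α, s, h⟩ := ColLT.exists_restrictIic_le hκ f
    exact ⟨_, mem_range_self (α, s), h⟩
  · exact nonempty_orderIso_range fun p p' =>
      hT.node_le_node_iff.trans ColLT.restrictIic_le_restrictIic_iff.symm

theorem williams_singular_general_general (μ : Cardinal) (hμ : ℵ₀ ≤ μ) (κ : Cardinal)
    (hcf : ((2 : Cardinal) ^ μ).ord.cof = κ) (Q : Type) [PartialOrder Q]
    (hatomless : ∀ p : Q, ∃ q r, q ≤ p ∧ r ≤ p ∧ Incompat q r)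
    (hclosed : ∀ o : Ordinal, o < κ.ord → ∀ f : o.ToType → Q,
      (∀ i j : o.ToType, i ≤ j → f j ≤ f i) → ∃ q, ∀ i, q ≤ f i)
    (hsize : #Q ≤ 2 ^ μ) :
    ∃ (D : Set Q) (E : Set (ColLT κ κ.ord.ToType ((2 ^ μ : Cardinal)).ord.ToType)),
      IsDenseSub D ∧ IsDenseSub E ∧ Nonempty (D ≃o E) := by
  have hμκ : μ < κ := hcf ▸ lt_cof_ord_power hμ one_lt_two
  have hQ : SeqClosed κ.ord.ToType Q := seqClosed_ord_toType hclosed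
  obtain ⟨α, hα⟩ := exists_mk_Iio_ord_toType_eq hμκ
  obtain ⟨q, -⟩ := hclosed 0 (by simpa using hμκ.pos) isEmptyElim isEmptyElim
  have : Nonempty Q := ⟨q⟩
  have hanti : HasLargeAntichains (2 ^ μ) Q := hα ▸ hQ.hasLargeAntichains hatomless α
  exact exists_dense_orderIso_colLT (hμ.trans_lt (cantor μ)) hcf hQ hanti hsize

end Assembly

/-- Let `μ` be an infinite cardinal, `κ = μ⁺`, and assume
`cf(2^μ) = κ`.  If `Q` is a separative atomless partial order of size `≤ 2^μ`
in which every decreasing sequence of length `< κ` has a lower bound, then there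
are dense subsets `D ⊆ Q` and `E ⊆ Col(κ, 2^μ)` which are order isomorphic. -/
theorem williams_singular_general (μ : Cardinal) (hμ : aleph0 ≤ μ) (κ : Cardinal)
    (hκ : κ = Order.succ μ)
    (hcf : ((2 : Cardinal) ^ μ).ord.cof = κ)
    (Q : Type) [PartialOrder Q]
    (hsep : ∀ p q : Q, ¬ q ≤ p → ∃ r, r ≤ q ∧ Incompat r p)
    (hatomless : ∀ p : Q, ∃ q r, q ≤ p ∧ r ≤ p ∧ Incompat q r)
    (hclosed : ∀ o : Ordinal, o < κ.ord → ∀ f : o.ToType → Q,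
      (∀ i j : o.ToType, i ≤ j → f j ≤ f i) → ∃ q, ∀ i, q ≤ f i)
    (hsize : #Q ≤ 2 ^ μ) :
    ∃ (D : Set Q) (E : Set (ColLT κ κ.ord.ToType ((2 ^ μ : Cardinal)).ord.ToType)),
      IsDenseSub D ∧ IsDenseSub E ∧ Nonempty (D ≃o E) :=
  williams_singular_general_general μ hμ κ hcf Q hatomless hclosed hsize
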